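/- arXiv:math/0510500 — 2 statements merged into one kernel-verified Lean document; each statement's English description precedes it below -/
import Mathlib

section
/- Let r ≥ 2, let w : Fin (r-2) → (Fin r → ℝ), and for x, y ∈ (Fin r → ℝ) write [x y] for the determinant of the r×r real matrix whose first r−2 columns are w 0, …, w (r−3) and last two columns are x and y. For any vectors a, b, c, d ∈ (Fin r → ℝ) there exists a permutation (a', b', c', d') of (a, b, c, d) such that [a' b']·[c' d'] ≥ 0, [a' c']·[b' d'] ≥ 0 and [a' d']·[b' c'] ≥ 0. -/
/-- The bracket `[x y]`: the determinant of the `r × r` real matrix whose first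
`r - 2` columns are `w 0, …, w (r-3)` and whose last two columns are `x` and `y`. -/
noncomputable def bracket (r : ℕ) (w : Fin (r - 2) → (Fin r → ℝ)) (x y : Fin r → ℝ) : ℝ :=
  Matrix.det (Matrix.of fun i j : Fin r =>
    if h : (j : ℕ) < r - 2 then w ⟨j, h⟩ i
    else if (j : ℕ) = r - 2 then x i else y i)

theorem bracket_eq_cramer (n : ℕ) (w : Fin (n + 2 - 2) → (Fin (n + 2) → ℝ))
    (u x y : Fin (n + 2) → ℝ) :
    bracket (n + 2) w x y = Matrix.cramer (Matrix.of fun i j : Fin (n + 2) =>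
    if h : (j : ℕ) < n + 2 - 2 then w ⟨j, h⟩ i
    else if (j : ℕ) = n + 2 - 2 then u i else y i) x ⟨n, by omega⟩ := by
  rw [Matrix.cramer_apply, bracket]
  congr 1
  ext i j
  simp only [Matrix.updateCol_apply, Matrix.of_apply, Fin.ext_iff]
  split_ifs <;> first | rfl | omega

theorem bracket_eq_cramer2 (n : ℕ) (w : Fin (n + 2 - 2) → (Fin (n + 2) → ℝ))
    (u x y : Fin (n + 2) → ℝ) :
    bracket (n + 2) w x y = Matrix.cramer (Matrix.of fun i j : Fin (n + 2) =>
    if h : (j : ℕ) < n + 2 - 2 then w ⟨j, h⟩ i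
    else if (j : ℕ) = n + 2 - 2 then x i else u i) y ⟨n + 1, by omega⟩ := by
  rw [Matrix.cramer_apply, bracket]
  congr 1
  ext i j
  simp only [Matrix.updateCol_apply, Matrix.of_apply, Fin.ext_iff]
  split_ifs <;> first | rfl | omega

theorem bracket_anti (n : ℕ) (w : Fin (n + 2 - 2) → (Fin (n + 2) → ℝ))
    (x y : Fin (n + 2) → ℝ) : bracket (n + 2) w y x = - bracket (n + 2) w x y := by
  have self : ∀ z, bracket (n + 2) w z z = 0 := by
    intro z
    apply Matrix.det_zero_of_column_eq (i := ⟨n, by omega⟩) (j := ⟨n + 1, by omega⟩)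
    · simp
    · intro k; simp
  have h := self (x + y)
  rw [bracket_eq_cramer n w 0, map_add, Pi.add_apply, ← bracket_eq_cramer, ← bracket_eq_cramer,
    bracket_eq_cramer2 n w 0 x, bracket_eq_cramer2 n w 0 y, map_add, map_add, Pi.add_apply,
    Pi.add_apply, ← bracket_eq_cramer2, ← bracket_eq_cramer2, ← bracket_eq_cramer2,
    ← bracket_eq_cramer2, self, self] at h
  linarith

theorem bracket_plucker (n : ℕ) (w : Fin (n + 2 - 2) → (Fin (n + 2) → ℝ))
    (a b c d : Fin (n + 2) → ℝ) :
    bracket (n + 2) w a b * bracket (n + 2) w c d =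
      bracket (n + 2) w c b * bracket (n + 2) w a d +
      bracket (n + 2) w a c * bracket (n + 2) w b d := by
  have key := Matrix.mulVec_cramer (Matrix.of fun i j : Fin (n + 2) =>
    if h : (j : ℕ) < n + 2 - 2 then w ⟨j, h⟩ i
    else if (j : ℕ) = n + 2 - 2 then a i else b i) c
  change _ = bracket (n + 2) w a b • c at key
  rw [Matrix.mulVec_eq_sum, Fin.sum_univ_castSucc, Fin.sum_univ_castSucc] at key
  have k1 := bracket_eq_cramer n w a c b
  have k2 := bracket_eq_cramer2 n w b a c
  have e1 : (Fin.castSucc (Fin.last n) : Fin (n + 2)) = ⟨n, by omega⟩ := rfl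
  have e2 : (Fin.last (n + 1) : Fin (n + 2)) = ⟨n + 1, by omega⟩ := rfl
  rw [e1, e2, ← k1, ← k2] at key
  obtain ⟨L, hL⟩ : ∃ L : (Fin (n + 2) → ℝ) →ₗ[ℝ] ℝ, ∀ x, L x = bracket (n + 2) w x d :=
    ⟨(LinearMap.proj (⟨n, by omega⟩ : Fin (n + 2))).comp
      (Matrix.cramer (Matrix.of fun i j : Fin (n + 2) =>
    if h : (j : ℕ) < n + 2 - 2 then w ⟨j, h⟩ i
    else if (j : ℕ) = n + 2 - 2 then (0 : Fin (n + 2) → ℝ) i else d i)),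
      fun x => (bracket_eq_cramer n w 0 x d).symm⟩
  have key2 := congrArg L key
  simp only [op_smul_eq_smul, map_add, map_smul, map_sum, smul_eq_mul] at key2
  simp only [hL] at key2
  rw [← key2, Finset.sum_eq_zero]
  · rw [zero_add]
    congr 3
    · ext i; simp [Matrix.transpose]
    · ext i; simp [Matrix.transpose]
  · intro j _
    apply mul_eq_zero_of_right
    apply Matrix.det_zero_of_column_eq (i := j.castSucc.castSucc) (j := ⟨n, by omega⟩)
    · simp [Fin.ext_iff]; omega
    · intro k; simp [Matrix.transpose]

/-- Any quadruple can be permuted into a normalized one. -/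
theorem exists_normalized_permutation (r : ℕ) (hr : 2 ≤ r)
    (w : Fin (r - 2) → (Fin r → ℝ)) (a b c d : Fin r → ℝ) :
    ∃ σ : Equiv.Perm (Fin 4),
      bracket r w (![a, b, c, d] (σ 0)) (![a, b, c, d] (σ 1)) *
          bracket r w (![a, b, c, d] (σ 2)) (![a, b, c, d] (σ 3)) ≥ 0 ∧
        bracket r w (![a, b, c, d] (σ 0)) (![a, b, c, d] (σ 2)) *
            bracket r w (![a, b, c, d] (σ 1)) (![a, b, c, d] (σ 3)) ≥ 0 ∧
          bracket r w (![a, b, c, d] (σ 0)) (![a, b, c, d] (σ 3)) *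
              bracket r w (![a, b, c, d] (σ 1)) (![a, b, c, d] (σ 2)) ≥ 0 := by
  obtain ⟨n, rfl⟩ : ∃ n, r = n + 2 := ⟨r - 2, by omega⟩
  have hp := bracket_plucker n w a b c d
  have hcb := bracket_anti n w b c
  have hdb := bracket_anti n w b d
  have hdc := bracket_anti n w c d
  rw [hcb] at hp
  generalize hB : bracket (n + 2) w = B at *
  have red : ∀ p q s : Fin 4, ∀ σ : Equiv.Perm (Fin 4), σ 0 = 0 → σ 1 = p → σ 2 = q → σ 3 = s →
      B a (![a, b, c, d] p) * B (![a, b, c, d] q) (![a, b, c, d] s) ≥ 0 →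
      B a (![a, b, c, d] q) * B (![a, b, c, d] p) (![a, b, c, d] s) ≥ 0 →
      B a (![a, b, c, d] s) * B (![a, b, c, d] p) (![a, b, c, d] q) ≥ 0 →
      ∃ σ : Equiv.Perm (Fin 4),
      B (![a, b, c, d] (σ 0)) (![a, b, c, d] (σ 1)) *
          B (![a, b, c, d] (σ 2)) (![a, b, c, d] (σ 3)) ≥ 0 ∧
        B (![a, b, c, d] (σ 0)) (![a, b, c, d] (σ 2)) *
            B (![a, b, c, d] (σ 1)) (![a, b, c, d] (σ 3)) ≥ 0 ∧
          B (![a, b, c, d] (σ 0)) (![a, b, c, d] (σ 3)) *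
              B (![a, b, c, d] (σ 1)) (![a, b, c, d] (σ 2)) ≥ 0 := by
    intro p q s σ h0 h1 h2 h3 A1 A2 A3
    refine ⟨σ, ?_⟩
    rw [h0, h1, h2, h3]
    exact ⟨A1, A2, A3⟩
  have r1 := red 1 2 3 (Equiv.refl _) rfl rfl rfl rfl
  have r2 := red 2 3 1 ⟨![0,2,3,1], ![0,3,1,2], by decide, by decide⟩ rfl rfl rfl rfl
  have r3 := red 3 1 2 ⟨![0,3,1,2], ![0,2,3,1], by decide, by decide⟩ rfl rfl rfl rfl
  have r4 := red 2 1 3 ⟨![0,2,1,3], ![0,2,1,3], by decide, by decide⟩ rfl rfl rfl rfl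
  have r5 := red 1 3 2 ⟨![0,1,3,2], ![0,1,3,2], by decide, by decide⟩ rfl rfl rfl rfl
  have r6 := red 3 2 1 ⟨![0,3,2,1], ![0,3,2,1], by decide, by decide⟩ rfl rfl rfl rfl
  clear red
  change B a b * B c d ≥ 0 → B a c * B b d ≥ 0 → B a d * B b c ≥ 0 → _ at r1
  change B a c * B d b ≥ 0 → B a d * B c b ≥ 0 → B a b * B c d ≥ 0 → _ at r2
  change B a d * B b c ≥ 0 → B a b * B d c ≥ 0 → B a c * B d b ≥ 0 → _ at r3
  change B a c * B b d ≥ 0 → B a b * B c d ≥ 0 → B a d * B c b ≥ 0 → _ at r4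
  change B a b * B d c ≥ 0 → B a d * B b c ≥ 0 → B a c * B b d ≥ 0 → _ at r5
  change B a d * B c b ≥ 0 → B a c * B d b ≥ 0 → B a b * B d c ≥ 0 → _ at r6
  rw [hdb, hcb] at r2
  rw [hdb, hdc] at r3
  rw [hcb] at r4
  rw [hdc] at r5
  rw [hcb, hdb, hdc] at r6
  rcases le_total 0 (B a b * B c d) with h1 | h1 <;>
  rcases le_total 0 (B a c * B b d) with h2 | h2 <;>
  rcases le_total 0 (B a d * B b c) with h3 | h3 <;>
  first
  | exact r1 (by linarith) (by linarith) (by linarith)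
  | exact r2 (by linarith) (by linarith) (by linarith)
  | exact r3 (by linarith) (by linarith) (by linarith)
  | exact r4 (by linarith) (by linarith) (by linarith)
  | exact r5 (by linarith) (by linarith) (by linarith)
  | exact r6 (by linarith) (by linarith) (by linarith)
end

section
/- Fix r ≥ 2. Let I be a nonempty finite index set and J a finite index set (possibly empty). For each i ∈ I ∪ J suppose given vectors wᵢ : Fin (r-2) → (Fin r → ℝ) and aᵢ, bᵢ, cᵢ, dᵢ ∈ (Fin r → ℝ), and write [x y]ᵢ for the determinant of the r×r real matrix whose first r−2 columns are wᵢ 0, …, wᵢ (r−3) and last two columns are x and y; set Pᵢ = [aᵢ bᵢ]ᵢ·[cᵢ dᵢ]ᵢ, Rᵢ = [aᵢ cᵢ]ᵢ·[bᵢ dᵢ]ᵢ, Qᵢ = [aᵢ dᵢ]ᵢ·[bᵢ cᵢ]ᵢ. Assume for every i ∈ I that Pᵢ ≥ 0 and Qᵢ > 0, and for every j ∈ J that Pⱼ = 0 and Qⱼ ≠ 0. Then (∏_{i∈I} Pᵢ)·(∏_{j∈J} Qⱼ) ≠ (∏_{i∈I} Rᵢ)·(∏_{j∈J} Rⱼ).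 -/
/-- The matrix of the bracket. -/
noncomputable def brMat (r : ℕ) (w : Fin (r - 2) → (Fin r → ℝ)) (x y : Fin r → ℝ) :
    Matrix (Fin r) (Fin r) ℝ :=
  Matrix.of fun i j : Fin r =>
    if h : (j : ℕ) < r - 2 then w ⟨j, h⟩ i
    else if (j : ℕ) = r - 2 then x i else y i

theorem bracket_fst (r : ℕ) (hr : 2 ≤ r) (w : Fin (r - 2) → (Fin r → ℝ)) (x y z : Fin r → ℝ) :
    Matrix.cramer (brMat r w x y) z ⟨r - 2, by omega⟩ = bracket r w z y := by
  rw [Matrix.cramer_apply]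
  unfold bracket
  congr 1
  ext i j
  by_cases hj : j = ⟨r - 2, by omega⟩
  · subst hj
    simp
  · have : (j : ℕ) ≠ r - 2 := fun h => hj (Fin.ext h)
    simp [hj, brMat, this]

theorem bracket_snd (r : ℕ) (hr : 2 ≤ r) (w : Fin (r - 2) → (Fin r → ℝ)) (x y z : Fin r → ℝ) :
    Matrix.cramer (brMat r w x y) z ⟨r - 1, by omega⟩ = bracket r w x z := by
  rw [Matrix.cramer_apply]
  unfold bracket
  congr 1
  ext i j
  by_cases hj : j = ⟨r - 1, by omega⟩
  · subst hj
    have h1 : ¬ (r - 1 < r - 2) := by omega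
    have h2 : ¬ (r - 1 = r - 2) := by omega
    simp [h1, h2]
  · have h3 : (j : ℕ) ≠ r - 1 := fun h => hj (Fin.ext h)
    have := j.2
    by_cases h1 : (j : ℕ) < r - 2
    · simp [hj, brMat, h1]
    · have h2 : (j : ℕ) = r - 2 := by omega
      simp [hj, brMat, h2]

theorem bracket_w (r : ℕ) (hr : 2 ≤ r) (w : Fin (r - 2) → (Fin r → ℝ)) (y : Fin r → ℝ)
    (k : Fin (r - 2)) : bracket r w (w k) y = 0 := by
  unfold bracket
  have hk := k.2
  refine Matrix.det_zero_of_column_eq (i := ⟨k, by omega⟩) (j := ⟨r - 2, by omega⟩) ?_ ?_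
  · intro h
    have := congrArg Fin.val h
    simp at this
    omega
  · intro i
    simp

theorem bracket_self (r : ℕ) (hr : 2 ≤ r) (w : Fin (r - 2) → (Fin r → ℝ)) (y : Fin r → ℝ) :
    bracket r w y y = 0 := by
  unfold bracket
  refine Matrix.det_zero_of_column_eq (i := ⟨r - 1, by omega⟩) (j := ⟨r - 2, by omega⟩) ?_ ?_
  · intro h
    have := congrArg Fin.val h
    simp at this
    omega
  · intro i
    have h1 : ¬ (r - 1 < r - 2) := by omega
    simp [h1]

theorem bracket_add (r : ℕ) (hr : 2 ≤ r) (w : Fin (r - 2) → (Fin r → ℝ)) (x x' y : Fin r → ℝ) :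
    bracket r w (x + x') y = bracket r w x y + bracket r w x' y := by
  simp only [← bracket_fst r hr w 0 y, map_add, Pi.add_apply]

theorem bracket_add_right (r : ℕ) (hr : 2 ≤ r) (w : Fin (r - 2) → (Fin r → ℝ))
    (x y y' : Fin r → ℝ) :
    bracket r w x (y + y') = bracket r w x y + bracket r w x y' := by
  simp only [← bracket_snd r hr w x 0, map_add, Pi.add_apply]

theorem bracket_swap (r : ℕ) (hr : 2 ≤ r) (w : Fin (r - 2) → (Fin r → ℝ)) (x y : Fin r → ℝ) :
    bracket r w y x = - bracket r w x y := by
  have h := bracket_self r hr w (x + y)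
  rw [bracket_add r hr, bracket_add_right r hr, bracket_add_right r hr,
    bracket_self r hr, bracket_self r hr] at h
  linarith

theorem bracket_gp (r : ℕ) (hr : 2 ≤ r) (w : Fin (r - 2) → (Fin r → ℝ)) (a b c d : Fin r → ℝ) :
    bracket r w a b * bracket r w c d + bracket r w a d * bracket r w b c
      = bracket r w a c * bracket r w b d := by
  have hc := Matrix.mulVec_cramer (brMat r w a b) c
  have hs : (brMat r w a b).mulVec (Matrix.cramer (brMat r w a b) c)
      = ∑ j, Matrix.cramer (brMat r w a b) c j • (fun i => brMat r w a b i j) := by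
    ext i
    simp [Matrix.mulVec, dotProduct, Finset.sum_apply, mul_comm]
  rw [hs] at hc
  have h2 := congrFun (congrArg (Matrix.cramer (brMat r w 0 d)) hc) ⟨r - 2, by omega⟩
  simp only [map_sum, map_smul, Finset.sum_apply, Pi.smul_apply, smul_eq_mul] at h2
  simp only [bracket_fst r hr w 0 d] at h2
  rw [Fintype.sum_eq_add (⟨r - 2, by omega⟩ : Fin r) ⟨r - 1, by omega⟩] at h2
  · rw [bracket_fst r hr, bracket_snd r hr] at h2
    have e1 : (fun i => brMat r w a b i ⟨r - 2, by omega⟩) = a := by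
      ext i
      simp [brMat]
    have e2 : (fun i => brMat r w a b i ⟨r - 1, by omega⟩) = b := by
      ext i
      have h1 : ¬ (r - 1 < r - 2) := by omega
      have h2 : ¬ (r - 1 = r - 2) := by omega
      simp [brMat, h1, h2]
    rw [e1, e2, bracket_swap r hr w b c] at h2
    have e3 : (brMat r w a b).det = bracket r w a b := rfl
    rw [e3] at h2
    linarith
  · intro h
    have := congrArg Fin.val h
    simp at this
    omega
  · rintro j ⟨h1, h2⟩
    have h1' : (j : ℕ) ≠ r - 2 := fun h => h1 (Fin.ext h)
    have h2' : (j : ℕ) ≠ r - 1 := fun h => h2 (Fin.ext h)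
    have h3 : (j : ℕ) < r - 2 := by omega
    have e : (fun i => brMat r w a b i j) = w ⟨j, h3⟩ := by
      ext i
      simp [brMat, h3]
    rw [e, bracket_w r hr, mul_zero]

/-- A biquadratic final polynomial identity cannot hold in any realization. -/
theorem no_biquadratic_final_polynomial (r : ℕ) (hr : 2 ≤ r)
    (ι κ : Type) [Fintype ι] [Fintype κ] [Nonempty ι]
    (w : ι ⊕ κ → Fin (r - 2) → (Fin r → ℝ))
    (a b c d : ι ⊕ κ → Fin r → ℝ)
    (P : ι ⊕ κ → ℝ) (R : ι ⊕ κ → ℝ) (Q : ι ⊕ κ → ℝ)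
    (hPdef : ∀ e, P e = bracket r (w e) (a e) (b e) * bracket r (w e) (c e) (d e))
    (hRdef : ∀ e, R e = bracket r (w e) (a e) (c e) * bracket r (w e) (b e) (d e))
    (hQdef : ∀ e, Q e = bracket r (w e) (a e) (d e) * bracket r (w e) (b e) (c e))
    (hI : ∀ i : ι, P (Sum.inl i) ≥ 0 ∧ Q (Sum.inl i) > 0)
    (hJ : ∀ j : κ, P (Sum.inr j) = 0 ∧ Q (Sum.inr j) ≠ 0) :
    (∏ i : ι, P (Sum.inl i)) * (∏ j : κ, Q (Sum.inr j)) ≠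
      (∏ i : ι, R (Sum.inl i)) * (∏ j : κ, R (Sum.inr j)) := by
  have gp : ∀ e, P e + Q e = R e := fun e => by
    rw [hPdef, hQdef, hRdef]
    exact bracket_gp r hr _ _ _ _ _
  have hJ' : (∏ j : κ, R (Sum.inr j)) = ∏ j : κ, Q (Sum.inr j) :=
    Finset.prod_congr rfl fun j _ => by rw [← gp, (hJ j).1, zero_add]
  have hQ : (∏ j : κ, Q (Sum.inr j)) ≠ 0 := Finset.prod_ne_zero_iff.2 fun j _ => (hJ j).2
  rw [hJ']
  intro h
  have h := mul_right_cancel₀ hQ h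
  refine absurd h (ne_of_lt ?_)
  have hR : ∀ i : ι, P (Sum.inl i) < R (Sum.inl i) := fun i => by
    have := gp (Sum.inl i)
    have := (hI i).2
    linarith
  by_cases h0 : ∃ i : ι, P (Sum.inl i) = 0
  · obtain ⟨i, hi⟩ := h0
    rw [Finset.prod_eq_zero (Finset.mem_univ i) hi]
    exact Finset.prod_pos fun i _ => lt_of_le_of_lt (hI i).1 (hR i)
  · push Not at h0
    exact Finset.prod_lt_prod_of_nonempty (fun i _ => lt_of_le_of_ne (hI i).1 (h0 i).symm)
      (fun i _ => hR i) Finset.univ_nonempty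
end
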